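/- arXiv:2301.02473 — 2 statements merged into one kernel-verified Lean document; each statement's English description precedes it below -/
import Mathlib

section
/- Let F : ℝ → ℝ be differentiable. Suppose x, y : ℝ → ℝ are twice differentiable and satisfy the Newtonian equations of motion for the potential V(x,y) = F(x+y), i.e. x'' = −F'(x+y) and y'' = −F'(x+y) along the solution. Then the cubic function J(t) = x'³ − y'³ + 3·F(x+y)·(x' − y') is constant in t. -/
/-!
A motion in a potential has constant energy, here `E = (x'² + y'²) / 2 + F(x + y)`. Since
`F(x + y)` is invariant under translations along `(1, -1)`, the momentum `u = x' - y'` is constant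
too. The cubic integral is a function of these two: `J = u (3 E - u² / 2)`.
-/

open scoped Gradient RealInnerProductSpace

theorem eq_of_forall_hasDerivAt_zero {𝕜 G : Type*} [RCLike 𝕜] [NormedAddCommGroup G]
    [NormedSpace 𝕜 G] {f : 𝕜 → G} (hf : ∀ t, HasDerivAt f 0 t) (t₁ t₂ : 𝕜) : f t₁ = f t₂ :=
  is_const_of_deriv_eq_zero (fun t ↦ (hf t).differentiableAt) (fun t ↦ (hf t).deriv) t₁ t₂

section Newtonian

variable {E : Type*} [NormedAddCommGroup E] [InnerProductSpace ℝ E]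

/-- The total energy of a unit mass at position `q` with velocity `v` in the potential `V`. -/
noncomputable def mechanicalEnergy (V : E → ℝ) (q v : E) : ℝ :=
  ‖v‖ ^ 2 / 2 + V q

variable [CompleteSpace E]

/-- Newton's equation `q'' = -∇V(q)` for a unit mass, as a first-order system for the position `q`
and the velocity `v`. Since `∇ V` is `0` where `V` is not differentiable, this has its physical
meaning only for differentiable `V`. -/
structure IsNewtonianMotion (V : E → ℝ) (q v : ℝ → E) : Prop where
  hasDerivAt_position : ∀ t, HasDerivAt q (v t) t
  hasDerivAt_velocity : ∀ t, HasDerivAt v (-∇ V (q t)) t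

namespace IsNewtonianMotion

variable {V : E → ℝ} {q v : ℝ → E}

theorem mechanicalEnergy_eq (h : IsNewtonianMotion V q v)
    (hV : ∀ t, DifferentiableAt ℝ V (q t)) (t₁ t₂ : ℝ) :
    mechanicalEnergy V (q t₁) (v t₁) = mechanicalEnergy V (q t₂) (v t₂) := by
  refine eq_of_forall_hasDerivAt_zero (f := fun t ↦ mechanicalEnergy V (q t) (v t))
    (fun t ↦ ?_) t₁ t₂
  have hkinetic : HasDerivAt (fun s ↦ ‖v s‖ ^ 2 / 2) (-⟪∇ V (q t), v t⟫) t :=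
    ((h.hasDerivAt_velocity t).norm_sq.div_const 2).congr_deriv <| by
      rw [inner_neg_right, real_inner_comm]
      ring
  have hpotential : HasDerivAt (fun s ↦ V (q s)) ⟪∇ V (q t), v t⟫ t :=
    (hV t).hasGradientAt.hasFDerivAt.comp_hasDerivAt t (h.hasDerivAt_position t)
  exact (hkinetic.add hpotential).congr_deriv (neg_add_cancel _)

theorem inner_velocity_eq (h : IsNewtonianMotion V q v) {m : E} (hm : ∀ t, ⟪m, ∇ V (q t)⟫ = 0)
    (t₁ t₂ : ℝ) : ⟪m, v t₁⟫ = ⟪m, v t₂⟫ := by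
  refine eq_of_forall_hasDerivAt_zero (f := fun t ↦ ⟪m, v t⟫) (fun t ↦ ?_) t₁ t₂
  refine ((innerSL ℝ m).hasFDerivAt.comp_hasDerivAt t (h.hasDerivAt_velocity t)).congr_deriv ?_
  rw [innerSL_apply_apply, inner_neg_right, hm, neg_zero]

end IsNewtonianMotion

theorem hasGradientAt_comp_inner {F : ℝ → ℝ} {F' : ℝ} {n p : E} (hF : HasDerivAt F F' ⟪n, p⟫) :
    HasGradientAt (fun q ↦ F ⟪n, q⟫) (F' • n) p := by
  rw [hasGradientAt_iff_hasFDerivAt, map_smul]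
  exact hF.comp_hasFDerivAt p (innerSL ℝ n).hasFDerivAt

end Newtonian

section Plane

theorem hasDerivAt_euclideanSpace_two {𝕜 : Type*} [RCLike 𝕜] {x y : 𝕜 → 𝕜} {x' y' t : 𝕜}
    (hx : HasDerivAt x x' t) (hy : HasDerivAt y y' t) :
    HasDerivAt (fun s ↦ !₂[x s, y s]) !₂[x', y'] t := by
  have hpi : HasDerivAt (fun s ↦ ![x s, y s]) ![x', y'] t :=
    hasDerivAt_pi.2 (Fin.forall_fin_two.2 ⟨hx, hy⟩)
  exact (PiLp.hasFDerivAt_toLp 2 _).comp_hasDerivAt t hpi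

theorem inner_euclideanSpace_two (p q : EuclideanSpace ℝ (Fin 2)) :
    ⟪p, q⟫ = p 0 * q 0 + p 1 * q 1 := by
  rw [PiLp.inner_apply, Fin.sum_univ_two, Real.inner_apply, Real.inner_apply]

/-- The potential `V(x, y) = F(x + y)` on the Euclidean plane. -/
def sumPotential (F : ℝ → ℝ) (p : EuclideanSpace ℝ (Fin 2)) : ℝ :=
  F (p 0 + p 1)

theorem hasGradientAt_sumPotential {F : ℝ → ℝ} {F' : ℝ} {p : EuclideanSpace ℝ (Fin 2)}
    (hF : HasDerivAt F F' (p 0 + p 1)) : HasGradientAt (sumPotential F) !₂[F', F'] p := by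
  have hinner (q : EuclideanSpace ℝ (Fin 2)) : q 0 + q 1 = ⟪!₂[1, 1], q⟫ := by
    simp [inner_euclideanSpace_two]
  have hsmul : F' • !₂[(1 : ℝ), 1] = !₂[F', F'] := by
    ext i
    fin_cases i <;> simp
  have hpotential : sumPotential F = fun q ↦ F ⟪!₂[1, 1], q⟫ :=
    funext fun q ↦ congrArg F (hinner q)
  rw [hinner] at hF
  rw [hpotential, ← hsmul]
  exact hasGradientAt_comp_inner hF

/-- The cubic `x'³ - y'³ + 3 F(x + y) (x' - y')` at the position `p = (x, y)` and the velocity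
`v = (x', y')`. -/
def cubicIntegral (F : ℝ → ℝ) (p v : EuclideanSpace ℝ (Fin 2)) : ℝ :=
  v 0 ^ 3 - v 1 ^ 3 + 3 * F (p 0 + p 1) * (v 0 - v 1)

theorem cubicIntegral_eq_inner_mul_mechanicalEnergy (F : ℝ → ℝ)
    (p v : EuclideanSpace ℝ (Fin 2)) :
    cubicIntegral F p v = ⟪!₂[1, -1], v⟫ *
      (3 * mechanicalEnergy (sumPotential F) p v - ⟪!₂[1, -1], v⟫ ^ 2 / 2) := by
  have hmomentum : ⟪!₂[1, -1], v⟫ = v 0 - v 1 := by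
    simp [inner_euclideanSpace_two, sub_eq_add_neg]
  have henergy : mechanicalEnergy (sumPotential F) p v =
      (v 0 ^ 2 + v 1 ^ 2) / 2 + F (p 0 + p 1) := by
    rw [mechanicalEnergy, sumPotential, EuclideanSpace.real_norm_sq_eq, Fin.sum_univ_two]
  rw [cubicIntegral, hmomentum, henergy]
  ring

theorem IsNewtonianMotion.cubicIntegral_eq {F : ℝ → ℝ} {q v : ℝ → EuclideanSpace ℝ (Fin 2)}
    (h : IsNewtonianMotion (sumPotential F) q v) (hF : Differentiable ℝ F) (t₁ t₂ : ℝ) :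
    cubicIntegral F (q t₁) (v t₁) = cubicIntegral F (q t₂) (v t₂) := by
  have hgradient (p : EuclideanSpace ℝ (Fin 2)) :=
    hasGradientAt_sumPotential (hF (p 0 + p 1)).hasDerivAt
  have henergy := h.mechanicalEnergy_eq (fun t ↦ (hgradient (q t)).differentiableAt) t₁ t₂
  have hmomentum : ⟪!₂[1, -1], v t₁⟫ = ⟪!₂[1, -1], v t₂⟫ :=
    h.inner_velocity_eq (fun t ↦ by simp [(hgradient _).gradient, inner_euclideanSpace_two]) t₁ t₂
  simp only [cubicIntegral_eq_inner_mul_mechanicalEnergy, henergy, hmomentum]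

end Plane

theorem stmt_4 (F F' : ℝ → ℝ)
    (hF : ∀ w, HasDerivAt F (F' w) w)
    (x y x' y' x'' y'' : ℝ → ℝ) (J : ℝ → ℝ)
    (hx : ∀ t, HasDerivAt x (x' t) t)
    (hy : ∀ t, HasDerivAt y (y' t) t)
    (hx' : ∀ t, HasDerivAt x' (x'' t) t)
    (hy' : ∀ t, HasDerivAt y' (y'' t) t)
    (heqx : ∀ t, x'' t = - F' (x t + y t))
    (heqy : ∀ t, y'' t = - F' (x t + y t))
    (hJ : ∀ t, J t =
      x' t ^ 3 - y' t ^ 3 + 3 * F (x t + y t) * (x' t - y' t)) :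
    ∀ t₁ t₂ : ℝ, J t₁ = J t₂ := by
  have hmotion : IsNewtonianMotion (sumPotential F)
      (fun t ↦ !₂[x t, y t]) (fun t ↦ !₂[x' t, y' t]) := by
    refine ⟨fun t ↦ hasDerivAt_euclideanSpace_two (hx t) (hy t), fun t ↦
      (hasDerivAt_euclideanSpace_two (hx' t) (hy' t)).congr_deriv ?_⟩
    rw [heqx, heqy, (hasGradientAt_sumPotential (hF _)).gradient]
    ext i
    fin_cases i <;> rfl
  intro t₁ t₂
  rw [hJ, hJ]
  exact hmotion.cubicIntegral_eq (fun w ↦ (hF w).differentiableAt) t₁ t₂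
end

section
/- Let c₁, c₂, c₃ be real constants. Suppose x, y : ℝ → ℝ are twice differentiable with x(t) ≠ 0 and y(t) ≠ 0 for all t, and satisfy the Newtonian equations of motion for the potential V(x,y) = c₁(x² + y²) + c₂/x² + c₃/y². Then the cubic function J(t) = (y·x' − x·y')·(x'y' + 2c₁xy) + 2c₂·(y/x²)·y' − 2c₃·(x/y²)·x' is constant in t. -/
/-!
The potential separates into two one-dimensional isotonic oscillators with the same harmonic
coefficient `c₁`. For such an oscillator the virial `x x'`, half the derivative of `x²`, solves the
linear equation `w'' = -8 c₁ w`, whatever the coefficient of the inverse-square term. The virials of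
the two coordinates thus solve the same linear equation, so their Wronskian is constant, and this
Wronskian is the cubic integral.
-/

section Wronskian

variable {𝕜 𝔸 : Type*} [NormedCommRing 𝔸] {f g f' g' q : 𝕜 → 𝔸}

theorem hasDerivAt_wronskian_zero [NontriviallyNormedField 𝕜] [NormedAlgebra 𝕜 𝔸] {t : 𝕜}
    (hf : HasDerivAt f (f' t) t) (hf' : HasDerivAt f' (q t * f t) t)
    (hg : HasDerivAt g (g' t) t) (hg' : HasDerivAt g' (q t * g t) t) :
    HasDerivAt (fun t => f t * g' t - f' t * g t) 0 t :=
  ((hf.mul hg').sub (hf'.mul hg)).congr_deriv (by ring)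

theorem wronskian_eq_of_isPreconnected [RCLike 𝕜] [NormedAlgebra 𝕜 𝔸] {s : Set 𝕜}
    (hso : IsOpen s) (hs : IsPreconnected s)
    (hf : ∀ t ∈ s, HasDerivAt f (f' t) t) (hf' : ∀ t ∈ s, HasDerivAt f' (q t * f t) t)
    (hg : ∀ t ∈ s, HasDerivAt g (g' t) t) (hg' : ∀ t ∈ s, HasDerivAt g' (q t * g t) t)
    {t₁ t₂ : 𝕜} (ht₁ : t₁ ∈ s) (ht₂ : t₂ ∈ s) :
    f t₁ * g' t₁ - f' t₁ * g t₁ = f t₂ * g' t₂ - f' t₂ * g t₂ := by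
  have hW : ∀ t ∈ s, HasDerivAt (fun t => f t * g' t - f' t * g t) 0 t := fun t ht =>
    hasDerivAt_wronskian_zero (hf t ht) (hf' t ht) (hg t ht) (hg' t ht)
  exact hso.is_const_of_deriv_eq_zero hs
    (fun t ht => (hW t ht).differentiableAt.differentiableWithinAt)
    (fun t ht => (hW t ht).deriv) ht₁ ht₂

end Wronskian

section IsotonicOscillator

variable {𝕜 : Type*}

/-- The potential `k a² + c / a²` of the one-dimensional isotonic oscillator. It is only meaningful
for `a ≠ 0`; at `a = 0` the second term is `0` by the convention for division. -/
def isotonicPotential [Field 𝕜] (k c a : 𝕜) : 𝕜 :=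
  k * a ^ 2 + c / a ^ 2

/-- The rate of change of the virial `a v` of an isotonic oscillator, as a function of the
position `a` and the velocity `v`. -/
def isotonicVirialRate [Field 𝕜] (k c a v : 𝕜) : 𝕜 :=
  v ^ 2 - 2 * k * a ^ 2 + 2 * c / a ^ 2

theorem angularMomentum_cubic_eq_wronskian [Field 𝕜] (k c d : 𝕜) {a b : 𝕜} (ha : a ≠ 0)
    (hb : b ≠ 0) (v w : 𝕜) :
    (b * v - a * w) * (v * w + 2 * k * a * b) + 2 * c * (b / a ^ 2) * w -
        2 * d * (a / b ^ 2) * v =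
      b * w * isotonicVirialRate k c a v - isotonicVirialRate k d b w * (a * v) := by
  simp only [isotonicVirialRate]
  field_simp
  ring

variable [NontriviallyNormedField 𝕜] {k c : 𝕜}

theorem hasDerivAt_const_div_sq (c : 𝕜) {a : 𝕜} (ha : a ≠ 0) :
    HasDerivAt (fun a => c / a ^ 2) (-(2 * c / a ^ 3)) a := by
  refine ((hasDerivAt_const a c).div (hasDerivAt_pow 2 a) (pow_ne_zero 2 ha)).congr_deriv ?_
  push_cast
  field_simp
  ring

theorem hasDerivAt_isotonicPotential (k c : 𝕜) {a : 𝕜} (ha : a ≠ 0) :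
    HasDerivAt (isotonicPotential k c) (2 * k * a - 2 * c / a ^ 3) a := by
  refine (((hasDerivAt_pow 2 a).const_mul k).add (hasDerivAt_const_div_sq c ha)).congr_deriv ?_
  push_cast
  ring

/-- The position `x` and velocity `v` satisfy, at time `t`, Newton's equation for a unit mass in the
isotonic potential with coefficients `k` and `c`, away from the singularity `x = 0`. -/
structure IsIsotonicMotionAt (k c : 𝕜) (x v : 𝕜 → 𝕜) (t : 𝕜) : Prop where
  ne_zero : x t ≠ 0
  hasDerivAt_position : HasDerivAt x (v t) t
  hasDerivAt_velocity : HasDerivAt v (-deriv (isotonicPotential k c) (x t)) t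

namespace IsIsotonicMotionAt

variable {x v : 𝕜 → 𝕜} {t : 𝕜}

theorem hasDerivAt_velocity_explicit (h : IsIsotonicMotionAt k c x v t) :
    HasDerivAt v (-(2 * k * x t - 2 * c / x t ^ 3)) t :=
  (hasDerivAt_isotonicPotential k c h.ne_zero).deriv ▸ h.hasDerivAt_velocity

theorem hasDerivAt_virial (h : IsIsotonicMotionAt k c x v t) :
    HasDerivAt (fun t => x t * v t) (isotonicVirialRate k c (x t) (v t)) t := by
  refine (h.hasDerivAt_position.mul h.hasDerivAt_velocity_explicit).congr_deriv ?_
  have := h.ne_zero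
  simp only [isotonicVirialRate]
  field_simp
  ring

theorem hasDerivAt_virialRate (h : IsIsotonicMotionAt k c x v t) :
    HasDerivAt (fun t => isotonicVirialRate k c (x t) (v t)) (-8 * k * (x t * v t)) t := by
  have hkinetic := h.hasDerivAt_velocity_explicit.pow 2
  have hharmonic := (h.hasDerivAt_position.pow 2).const_mul (2 * k)
  have hinverse := (hasDerivAt_const_div_sq (2 * c) h.ne_zero).comp t h.hasDerivAt_position
  refine ((hkinetic.sub hharmonic).add hinverse).congr_deriv ?_
  push_cast
  ring

end IsIsotonicMotionAt

end IsotonicOscillator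

theorem stmt_8_general {𝕜 : Type*} [RCLike 𝕜] {s : Set 𝕜} (hso : IsOpen s)
    (hs : IsPreconnected s) {c₁ c₂ c₃ : 𝕜} {x y x' y' x'' y'' : 𝕜 → 𝕜} {V : 𝕜 → 𝕜 → 𝕜}
    {J : 𝕜 → 𝕜}
    (hV : ∀ a b : 𝕜, V a b = c₁ * (a ^ 2 + b ^ 2) + c₂ / a ^ 2 + c₃ / b ^ 2)
    (hx : ∀ t ∈ s, HasDerivAt x (x' t) t)
    (hy : ∀ t ∈ s, HasDerivAt y (y' t) t)
    (hx' : ∀ t ∈ s, HasDerivAt x' (x'' t) t)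
    (hy' : ∀ t ∈ s, HasDerivAt y' (y'' t) t)
    (hxne : ∀ t ∈ s, x t ≠ 0)
    (hyne : ∀ t ∈ s, y t ≠ 0)
    (heqx : ∀ t ∈ s, x'' t = -deriv (fun a => V a (y t)) (x t))
    (heqy : ∀ t ∈ s, y'' t = -deriv (fun b => V (x t) b) (y t))
    (hJ : ∀ t ∈ s, J t =
      (y t * x' t - x t * y' t) * (x' t * y' t + 2 * c₁ * x t * y t) +
      2 * c₂ * (y t / x t ^ 2) * y' t - 2 * c₃ * (x t / y t ^ 2) * x' t) :
    ∀ t₁ ∈ s, ∀ t₂ ∈ s, J t₁ = J t₂ := by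
  have hVsep (a b : 𝕜) : V a b = isotonicPotential c₁ c₂ a + isotonicPotential c₁ c₃ b := by
    rw [hV, isotonicPotential, isotonicPotential]
    ring
  have hxmotion (t) (ht : t ∈ s) : IsIsotonicMotionAt c₁ c₂ x x' t := by
    refine ⟨hxne t ht, hx t ht, (hx' t ht).congr_deriv ?_⟩
    simp only [heqx t ht, hVsep, deriv_add_const]
  have hymotion (t) (ht : t ∈ s) : IsIsotonicMotionAt c₁ c₃ y y' t := by
    refine ⟨hyne t ht, hy t ht, (hy' t ht).congr_deriv ?_⟩
    simp only [heqy t ht, hVsep, deriv_const_add]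
  intro t₁ ht₁ t₂ ht₂
  rw [hJ t₁ ht₁, hJ t₂ ht₂,
    angularMomentum_cubic_eq_wronskian c₁ c₂ c₃ (hxne t₁ ht₁) (hyne t₁ ht₁),
    angularMomentum_cubic_eq_wronskian c₁ c₂ c₃ (hxne t₂ ht₂) (hyne t₂ ht₂)]
  exact wronskian_eq_of_isPreconnected hso hs (q := fun _ => -8 * c₁)
    (fun t ht => (hymotion t ht).hasDerivAt_virial)
    (fun t ht => (hymotion t ht).hasDerivAt_virialRate)
    (fun t ht => (hxmotion t ht).hasDerivAt_virial)
    (fun t ht => (hxmotion t ht).hasDerivAt_virialRate) ht₁ ht₂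

theorem stmt_8 (c₁ c₂ c₃ : ℝ) (x y x' y' x'' y'' : ℝ → ℝ) (V : ℝ → ℝ → ℝ) (J : ℝ → ℝ)
    (hV : ∀ a b : ℝ, V a b = c₁ * (a ^ 2 + b ^ 2) + c₂ / a ^ 2 + c₃ / b ^ 2)
    (hx : ∀ t, HasDerivAt x (x' t) t)
    (hy : ∀ t, HasDerivAt y (y' t) t)
    (hx' : ∀ t, HasDerivAt x' (x'' t) t)
    (hy' : ∀ t, HasDerivAt y' (y'' t) t)
    (hxne : ∀ t, x t ≠ 0)
    (hyne : ∀ t, y t ≠ 0)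
    (heqx : ∀ t, x'' t = - deriv (fun a => V a (y t)) (x t))
    (heqy : ∀ t, y'' t = - deriv (fun b => V (x t) b) (y t))
    (hJ : ∀ t, J t =
      (y t * x' t - x t * y' t) * (x' t * y' t + 2 * c₁ * x t * y t) +
      2 * c₂ * (y t / x t ^ 2) * y' t - 2 * c₃ * (x t / y t ^ 2) * x' t) :
    ∀ t₁ t₂ : ℝ, J t₁ = J t₂ :=
  fun t₁ t₂ => stmt_8_general isOpen_univ isPreconnected_univ hV (fun t _ => hx t)
    (fun t _ => hy t) (fun t _ => hx' t) (fun t _ => hy' t) (fun t _ => hxne t)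
    (fun t _ => hyne t) (fun t _ => heqx t) (fun t _ => heqy t) (fun t _ => hJ t)
    t₁ (Set.mem_univ t₁) t₂ (Set.mem_univ t₂)
end
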